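/- arXiv:1909.02382 — 9 statements merged into one kernel-verified Lean document; each statement's English description precedes it below -/
import Mathlib

section
/- Let (X, ‖·‖) be a real Banach space and let T : X → X be a (b,θ)-enriched contraction, i.e., there exist b ∈ [0,∞) and θ ∈ [0, b+1) such that ‖b(x−y) + Tx − Ty‖ ≤ θ‖x−y‖ for all x, y ∈ X. Then T has exactly one fixed point in X. -/
/-!
The averaged map `S x = (b + 1)⁻¹ • (b • x + T x)` has the same fixed points as `T`, and the
enriched contraction inequality says exactly that `S` is Lipschitz with constant
`θ / (b + 1) < 1`. The Banach contraction principle for `S` then gives the result.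
-/

/-- **Enriched contraction principle (existence and uniqueness).**
If `(X, ‖·‖)` is a real Banach space and `T : X → X` is a `(b, θ)`-enriched
contraction, i.e. `b ∈ [0,∞)`, `θ ∈ [0, b+1)` and
`‖b•(x−y) + Tx − Ty‖ ≤ θ‖x−y‖` for all `x y`, then `T` has exactly one
fixed point. -/
theorem enriched_contraction_unique_fixed_point
    {X : Type*} [NormedAddCommGroup X] [NormedSpace ℝ X] [CompleteSpace X]
    (T : X → X) (b θ : ℝ) (hb : 0 ≤ b) (hθ0 : 0 ≤ θ) (hθ : θ < b + 1)
    (hT : ∀ x y : X, ‖b • (x - y) + (T x - T y)‖ ≤ θ * ‖x - y‖) :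
    ∃! p : X, T p = p := by
  have hb1 : 0 < b + 1 := by linarith
  have hfix : ∀ x, (b + 1)⁻¹ • (b • x + T x) = x ↔ T x = x := fun x => by
    rw [inv_smul_eq_iff₀ hb1.ne', add_smul, one_smul, add_right_inj]
  have hS : ContractingWith (NNReal.mk (θ / (b + 1)) (by positivity))
      (fun x => (b + 1)⁻¹ • (b • x + T x)) := by
    refine ⟨?_, LipschitzWith.of_dist_le_mul fun x y => ?_⟩
    · rw [← NNReal.coe_lt_coe]
      exact (div_lt_one hb1).2 hθ
    · have hdiff : b • x + T x - (b • y + T y) = b • (x - y) + (T x - T y) := by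
        rw [smul_sub]; abel
      rw [dist_eq_norm, dist_eq_norm, ← smul_sub, hdiff, norm_smul,
        Real.norm_of_nonneg (inv_nonneg.2 hb1.le)]
      calc (b + 1)⁻¹ * ‖b • (x - y) + (T x - T y)‖
          ≤ (b + 1)⁻¹ * (θ * ‖x - y‖) := by gcongr; exact hT x y
        _ = θ / (b + 1) * ‖x - y‖ := by ring
  exact ⟨hS.fixedPoint, (hfix _).1 hS.fixedPoint_isFixedPt,
    fun y hy => hS.fixedPoint_unique ((hfix y).2 hy)⟩
end

section
/- Let (X, ‖·‖) be a real Banach space and let T : X → X be a (b,θ)-enriched contraction with unique fixed point p. Set λ = 1/(b+1). Then for any x₀ ∈ X, the Krasnoselskij iteration defined by x_{n+1} = (1−λ)x_n + λ T x_n converges to p. -/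
/-!
With `λ = 1/(b+1)` one has `1 - λ = λ b`, so the averaged map `x ↦ (1 - λ) x + λ T x` satisfies
`T_λ x - p = λ (b (x - p) + (T x - T p))`. The enriched contraction condition therefore says that
each step shrinks the distance to `p` by the factor `λ θ = θ/(b+1) < 1`, and the iterates converge
to `p` geometrically.
-/

/-- **Convergence of the Krasnoselskij iteration for enriched contractions.**
If `T` is a `(b, θ)`-enriched contraction on a real Banach space with
(unique) fixed point `p` and `λ = 1/(b+1)`, then for every `x₀` the
Krasnoselskij iteration `x_{n+1} = (1−λ)x_n + λ T x_n` converges to `p`. -/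
theorem enriched_contraction_krasnoselskij_converges
    {X : Type*} [NormedAddCommGroup X] [NormedSpace ℝ X] [CompleteSpace X]
    (T : X → X) (b θ : ℝ) (hb : 0 ≤ b) (hθ0 : 0 ≤ θ) (hθ : θ < b + 1)
    (hT : ∀ x y : X, ‖b • (x - y) + (T x - T y)‖ ≤ θ * ‖x - y‖)
    (p : X) (hp : T p = p) (hpuniq : ∀ q : X, T q = q → q = p)
    (lam : ℝ) (hlam : lam = 1 / (b + 1)) (x₀ : X) :
    Filter.Tendsto
      (fun n : ℕ => (fun x => (1 - lam) • x + lam • T x)^[n] x₀)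
      Filter.atTop (nhds p) := by
  have hb1 : 0 < b + 1 := by linarith
  have hlam0 : 0 < lam := by rw [hlam]; positivity
  have hlamb : 1 - lam = lam * b := by rw [hlam]; field_simp; ring
  have hc0 : 0 ≤ lam * θ := by positivity
  have hc1 : lam * θ < 1 := by nlinarith
  have step : ∀ x, ‖(1 - lam) • x + lam • T x - p‖ ≤ lam * θ * ‖x - p‖ := by
    intro x
    have hp1 : p = (1 - lam) • p + lam • T p := by rw [hp]; module
    have e : (1 - lam) • x + lam • T x - p = lam • (b • (x - p) + (T x - T p)) := by
      conv_lhs => rw [hp1, hlamb]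
      module
    rw [e, norm_smul, Real.norm_of_nonneg hlam0.le, mul_assoc]
    exact mul_le_mul_of_nonneg_left (hT x p) hlam0.le
  have bound : ∀ n : ℕ, ‖(fun x => (1 - lam) • x + lam • T x)^[n] x₀ - p‖
      ≤ (lam * θ) ^ n * ‖x₀ - p‖ := by
    intro n
    induction n with
    | zero => simp
    | succ k ih =>
      rw [Function.iterate_succ_apply', pow_succ', mul_assoc]
      exact (step _).trans (mul_le_mul_of_nonneg_left ih hc0)
  rw [tendsto_iff_norm_sub_tendsto_zero]
  refine squeeze_zero (fun _ => norm_nonneg _) bound ?_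
  simpa using (tendsto_pow_atTop_nhds_zero_of_lt_one hc0 hc1).mul_const ‖x₀ - p‖
end

section
/- Let (X, ‖·‖) be a real Banach space, T : X → X a (b,θ)-enriched contraction with unique fixed point p, λ = 1/(b+1), c = θ/(b+1), and let (x_n) be the Krasnoselskij iteration x_{n+1} = (1−λ)x_n + λ T x_n starting from an arbitrary x₀ ∈ X. Then the a priori error estimate ‖x_n − p‖ ≤ (cⁿ/(1−c))·‖x₁ − x₀‖ holds for all n ≥ 1. -/
/-!
The averaged map `F x = (1 - λ) x + λ T x` satisfies
`F x - F y = λ (b (x - y) + T x - T y)` because `1 - λ = λ b`, so it is a contraction with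
ratio `c = θ / (b + 1)`, and it fixes `p`. Hence `‖Fⁿ x₀ - p‖ ≤ cⁿ ‖x₀ - p‖`, while
`‖x₀ - p‖ ≤ ‖F x₀ - x₀‖ + c ‖x₀ - p‖` gives `‖x₀ - p‖ ≤ ‖F x₀ - x₀‖ / (1 - c)`.
-/

/-- **A priori error estimate for the Krasnoselskij iteration.**
For a `(b, θ)`-enriched contraction `T` on a real Banach space with unique
fixed point `p`, with `λ = 1/(b+1)`, `c = θ/(b+1)`, and Krasnoselskij
iterates `x_n = T_λ^[n] x₀`, one has
`‖x_n − p‖ ≤ (cⁿ/(1−c))·‖x₁ − x₀‖` for all `n ≥ 1`. -/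
theorem enriched_contraction_a_priori_estimate
    {X : Type*} [NormedAddCommGroup X] [NormedSpace ℝ X] [CompleteSpace X]
    (T : X → X) (b θ : ℝ) (hb : 0 ≤ b) (hθ0 : 0 ≤ θ) (hθ : θ < b + 1)
    (hT : ∀ x y : X, ‖b • (x - y) + (T x - T y)‖ ≤ θ * ‖x - y‖)
    (p : X) (hp : T p = p) (hpuniq : ∀ q : X, T q = q → q = p)
    (lam c : ℝ) (hlam : lam = 1 / (b + 1)) (hc : c = θ / (b + 1))
    (x₀ : X) :
    ∀ n : ℕ, 1 ≤ n →
      ‖(fun x => (1 - lam) • x + lam • T x)^[n] x₀ - p‖ ≤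
        c ^ n / (1 - c) *
          ‖(fun x => (1 - lam) • x + lam • T x) x₀ - x₀‖ := by
  intro n _
  have hb1 : 0 < b + 1 := by linarith
  have hc0 : 0 ≤ c := by rw [hc]; positivity
  have hc1 : 0 < 1 - c := by
    rw [hc, sub_pos, div_lt_one hb1]
    exact hθ
  have hlam0 : 0 ≤ lam := by rw [hlam]; positivity
  have hlamb : 1 - lam = lam * b := by rw [hlam]; field_simp; ring
  have hlamθ : lam * θ = c := by rw [hlam, hc]; ring
  set F : X → X := fun x => (1 - lam) • x + lam • T x with hF
  have hFp : F p = p := by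
    simp only [hF, hp]
    module
  have hcontr : ∀ x, ‖F x - p‖ ≤ c * ‖x - p‖ := by
    intro x
    have hdiff : F x - p = lam • (b • (x - p) + (T x - T p)) := by
      nth_rewrite 1 [← hFp]
      simp only [hF, hlamb]
      module
    rw [hdiff, norm_smul, Real.norm_of_nonneg hlam0, ← hlamθ, mul_assoc]
    exact mul_le_mul_of_nonneg_left (hT x p) hlam0
  have hiter : ‖F^[n] x₀ - p‖ ≤ c ^ n * ‖x₀ - p‖ := by
    clear * - hcontr hc0
    induction n with
    | zero => simp
    | succ k ih =>
      rw [Function.iterate_succ_apply', pow_succ', mul_assoc]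
      exact (hcontr _).trans (mul_le_mul_of_nonneg_left ih hc0)
  have hinit : ‖x₀ - p‖ ≤ ‖F x₀ - x₀‖ / (1 - c) := by
    rw [le_div_iff₀ hc1]
    have htri := norm_sub_le_norm_sub_add_norm_sub x₀ (F x₀) p
    rw [norm_sub_rev x₀ (F x₀)] at htri
    linarith [hcontr x₀]
  calc ‖F^[n] x₀ - p‖ ≤ c ^ n * ‖x₀ - p‖ := hiter
    _ ≤ c ^ n * (‖F x₀ - x₀‖ / (1 - c)) :=
      mul_le_mul_of_nonneg_left hinit (pow_nonneg hc0 n)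
    _ = c ^ n / (1 - c) * ‖F x₀ - x₀‖ := by ring
end

section
/- Let (X, ‖·‖) be a real Banach space, T : X → X a (b,θ)-enriched contraction with unique fixed point p, λ = 1/(b+1), c = θ/(b+1), and let (x_n) be the Krasnoselskij iteration x_{n+1} = (1−λ)x_n + λ T x_n starting from an arbitrary x₀ ∈ X. Then the a posteriori error estimate ‖x_n − p‖ ≤ (c/(1−c))·‖x_n − x_{n−1}‖ holds for all n ≥ 1. -/
/-!
The averaged map `S x = (1 - λ) x + λ T x` with `λ = 1 / (b + 1)` fixes `p` and satisfies
`S y - p = λ (b (y - p) + (T y - T p))`, so the enriched contraction condition at `(y, p)` gives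
`‖S y - p‖ ≤ c ‖y - p‖`. With `y = x_{n-1}` and `S y = x_n`, the triangle inequality
`‖y - p‖ ≤ ‖S y - y‖ + ‖S y - p‖` gives `(1 - c) ‖S y - p‖ ≤ c ‖S y - y‖`.
-/

/-- **A posteriori error estimate for the Krasnoselskij iteration.**
For a `(b, θ)`-enriched contraction `T` on a real Banach space with unique
fixed point `p`, with `λ = 1/(b+1)`, `c = θ/(b+1)`, and Krasnoselskij
iterates `x_n = T_λ^[n] x₀`, one has
`‖x_n − p‖ ≤ (c/(1−c))·‖x_n − x_{n−1}‖` for all `n ≥ 1`. -/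
theorem enriched_contraction_a_posteriori_estimate
    {X : Type*} [NormedAddCommGroup X] [NormedSpace ℝ X] [CompleteSpace X]
    (T : X → X) (b θ : ℝ) (hb : 0 ≤ b) (hθ0 : 0 ≤ θ) (hθ : θ < b + 1)
    (hT : ∀ x y : X, ‖b • (x - y) + (T x - T y)‖ ≤ θ * ‖x - y‖)
    (p : X) (hp : T p = p) (hpuniq : ∀ q : X, T q = q → q = p)
    (lam c : ℝ) (hlam : lam = 1 / (b + 1)) (hc : c = θ / (b + 1))
    (x₀ : X) :
    ∀ n : ℕ, 1 ≤ n →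
      ‖(fun x => (1 - lam) • x + lam • T x)^[n] x₀ - p‖ ≤
        c / (1 - c) *
          ‖(fun x => (1 - lam) • x + lam • T x)^[n] x₀ -
            (fun x => (1 - lam) • x + lam • T x)^[n - 1] x₀‖ := by
  intro n hn
  obtain ⟨m, rfl⟩ : ∃ m, n = m + 1 := ⟨n - 1, by omega⟩
  rw [Nat.add_sub_cancel, Function.iterate_succ_apply']
  generalize (fun x => (1 - lam) • x + lam • T x)^[m] x₀ = y
  have hb1 : 0 < b + 1 := by linarith
  have hlam0 : 0 ≤ lam := by rw [hlam]; positivity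
  have hc0 : 0 ≤ c := by rw [hc]; positivity
  have hc1 : c < 1 := by rw [hc, div_lt_one hb1]; exact hθ
  have hlamb : 1 - lam = lam * b := by rw [hlam]; field_simp; ring
  have hlamθ : lam * θ = c := by rw [hlam, hc]; ring
  have key : (1 - lam) • y + lam • T y - p = lam • (b • (y - p) + (T y - T p)) := by
    have hp' : p = (lam * b) • p + lam • p := by
      rw [← hlamb, ← add_smul, sub_add_cancel, one_smul]
    rw [hp, hlamb]
    nth_rewrite 1 [hp']
    module
  have contr : ‖(1 - lam) • y + lam • T y - p‖ ≤ c * ‖y - p‖ := by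
    rw [key, norm_smul, Real.norm_of_nonneg hlam0, ← hlamθ, mul_assoc]
    exact mul_le_mul_of_nonneg_left (hT y p) hlam0
  generalize (1 - lam) • y + lam • T y = z at contr ⊢
  have tri : ‖y - p‖ ≤ ‖z - y‖ + ‖z - p‖ := by
    rw [norm_sub_rev z y]
    exact norm_sub_le_norm_sub_add_norm_sub y z p
  rw [div_mul_eq_mul_div, le_div_iff₀ (by linarith)]
  nlinarith [mul_le_mul_of_nonneg_left tri hc0]
end

section
/- Let (X, ‖·‖) be a real normed linear space and let T : X → X be a (b,θ)-enriched contraction with b > 0. Set λ = 1/(b+1) and define the averaged map T_λ(x) = (1−λ)x + λ T(x). Then T_λ is a contraction with Lipschitz constant c = θ/(b+1) < 1, i.e., ‖T_λ x − T_λ y‖ ≤ c‖x − y‖ for all x, y ∈ X. -/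
/-- **The averaged map of an enriched contraction is a contraction.**
If `T` is a `(b, θ)`-enriched contraction on a real normed space with
`b > 0`, `λ = 1/(b+1)` and `T_λ(x) = (1−λ)x + λTx`, then `T_λ` is a
`c`-contraction with `c = θ/(b+1) < 1`. -/
theorem enriched_contraction_averaged_is_contraction
    {X : Type*} [NormedAddCommGroup X] [NormedSpace ℝ X]
    (T : X → X) (b θ : ℝ) (hb : 0 < b) (hθ0 : 0 ≤ θ) (hθ : θ < b + 1)
    (hT : ∀ x y : X, ‖b • (x - y) + (T x - T y)‖ ≤ θ * ‖x - y‖)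
    (lam c : ℝ) (hlam : lam = 1 / (b + 1)) (hc : c = θ / (b + 1)) :
    c < 1 ∧
      ∀ x y : X,
        ‖((1 - lam) • x + lam • T x) - ((1 - lam) • y + lam • T y)‖ ≤
          c * ‖x - y‖ := by
  have hb1 : 0 < b + 1 := by linarith
  have hlam0 : 0 ≤ lam := by rw [hlam]; positivity
  refine ⟨by rw [hc, div_lt_one hb1]; exact hθ, fun x y => ?_⟩
  -- The choice of `lam` is exactly what makes `1 - lam = lam * b`.
  have h1 : 1 - lam = lam * b := by rw [hlam]; field_simp; ring
  have h2 : ((1 - lam) • x + lam • T x) - ((1 - lam) • y + lam • T y)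
      = lam • (b • (x - y) + (T x - T y)) := by
    rw [h1]; module
  rw [h2, norm_smul, Real.norm_of_nonneg hlam0]
  calc lam * ‖b • (x - y) + (T x - T y)‖ ≤ lam * (θ * ‖x - y‖) :=
        mul_le_mul_of_nonneg_left (hT x y) hlam0
    _ = c * ‖x - y‖ := by rw [hlam, hc]; ring
end

section
/- Let (X, ‖·‖) be a real Banach space, x₀ ∈ X, r > 0, and let B = B(x₀, r) = {x ∈ X : ‖x − x₀‖ < r} be the open ball. Let T : B → X be a (b,θ)-enriched contraction on B, i.e., there exist b ∈ [0,∞) and θ ∈ [0, b+1) such that ‖b(x−y) + Tx − Ty‖ ≤ θ‖x−y‖ for all x, y ∈ B. If ‖Tx₀ − x₀‖ < (b+1−θ)r, then T has a fixed point in B. -/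
/-!
A point is fixed by `T` exactly when it is fixed by the averaged map
`f x = (b + 1)⁻¹ • (b • x + T x)`. On the ball `f` is an ordinary contraction with constant
`θ / (b + 1) < 1`. With `ε = ‖T x₀ - x₀‖ / (b + 1 - θ) < r`, it maps the closed ball of radius `ε`
about `x₀` into itself, since `f` displaces `x₀` by `‖T x₀ - x₀‖ / (b + 1) = (1 - θ / (b + 1)) ε`.
Banach's fixed point theorem on that complete set gives the fixed point.
-/

/-- **Local version of the enriched contraction principle.**
Let `B = B(x₀, r)` be an open ball in a real Banach space and `T : B → X`
a `(b, θ)`-enriched contraction on `B`. If `‖Tx₀ − x₀‖ < (b+1−θ)r`,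
then `T` has a fixed point (in `B`). -/
theorem enriched_contraction_local
    {X : Type*} [NormedAddCommGroup X] [NormedSpace ℝ X] [CompleteSpace X]
    (x₀ : X) (r : ℝ) (hr : 0 < r) (T : X → X) (b θ : ℝ)
    (hb : 0 ≤ b) (hθ0 : 0 ≤ θ) (hθ : θ < b + 1)
    (hT : ∀ x ∈ Metric.ball x₀ r, ∀ y ∈ Metric.ball x₀ r,
      ‖b • (x - y) + (T x - T y)‖ ≤ θ * ‖x - y‖)
    (hx₀ : ‖T x₀ - x₀‖ < (b + 1 - θ) * r) :
    ∃ x ∈ Metric.ball x₀ r, T x = x := by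
  have hb1 : 0 < b + 1 := by linarith
  have hgap : 0 < b + 1 - θ := by linarith
  set f : X → X := fun x => (b + 1)⁻¹ • (b • x + T x) with hf
  set ε : ℝ := ‖T x₀ - x₀‖ / (b + 1 - θ) with hε
  have hε0 : 0 ≤ ε := by positivity
  have hεr : ε < r := by rw [hε, div_lt_iff₀ hgap]; linarith
  have hsub : Metric.closedBall x₀ ε ⊆ Metric.ball x₀ r := Metric.closedBall_subset_ball hεr
  have hdist : ∀ x ∈ Metric.ball x₀ r, ∀ y ∈ Metric.ball x₀ r,
      dist (f x) (f y) ≤ θ / (b + 1) * dist x y := by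
    intro x hx y hy
    have e : f x - f y = (b + 1)⁻¹ • (b • (x - y) + (T x - T y)) := by
      simp only [hf]; module
    rw [dist_eq_norm, dist_eq_norm, e, norm_smul, Real.norm_of_nonneg (by positivity)]
    calc (b + 1)⁻¹ * ‖b • (x - y) + (T x - T y)‖ ≤ (b + 1)⁻¹ * (θ * ‖x - y‖) := by
          gcongr; exact hT x hx y hy
      _ = θ / (b + 1) * ‖x - y‖ := by ring
  have hdispl : ∀ x, f x - x = (b + 1)⁻¹ • (T x - x) := by
    intro x
    have e : x = (b + 1)⁻¹ • ((b + 1) • x) := (inv_smul_smul₀ hb1.ne' x).symm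
    calc f x - x = f x - (b + 1)⁻¹ • ((b + 1) • x) := by rw [← e]
      _ = (b + 1)⁻¹ • (T x - x) := by simp only [hf]; module
  have hmaps : Set.MapsTo f (Metric.closedBall x₀ ε) (Metric.closedBall x₀ ε) := by
    intro x hx
    have h1 := hdist x (hsub hx) x₀ (Metric.mem_ball_self hr)
    have h2 : dist (f x₀) x₀ = (b + 1)⁻¹ * ‖T x₀ - x₀‖ := by
      rw [dist_eq_norm, hdispl, norm_smul, Real.norm_of_nonneg (by positivity)]
    have h3 : ‖T x₀ - x₀‖ = ε * (b + 1 - θ) := by rw [hε]; field_simp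
    rw [Metric.mem_closedBall] at hx ⊢
    calc dist (f x) x₀ ≤ dist (f x) (f x₀) + dist (f x₀) x₀ := dist_triangle _ _ _
      _ ≤ θ / (b + 1) * ε + (b + 1)⁻¹ * (ε * (b + 1 - θ)) := by
          rw [h2, h3]; gcongr; exact h1.trans (by gcongr)
      _ = ε := by field_simp; ring
  have hcontr : ContractingWith ⟨θ / (b + 1), by positivity⟩ (hmaps.restrict f _ _) := by
    refine ⟨?_, LipschitzWith.of_dist_le_mul fun x y => ?_⟩
    · apply NNReal.coe_lt_coe.1
      exact (div_lt_one hb1).2 hθ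
    · exact hdist x (hsub x.2) y (hsub y.2)
  obtain ⟨y, hy, hfy, -⟩ := hcontr.exists_fixedPoint' Metric.isClosed_closedBall.isComplete hmaps
    (Metric.mem_closedBall_self hε0) (edist_ne_top _ _)
  refine ⟨y, hsub hy, ?_⟩
  have h := hdispl y
  rw [hfy.eq, sub_self, eq_comm, smul_eq_zero_iff_right (inv_ne_zero hb1.ne')] at h
  exact sub_eq_zero.1 h
end

section
/- Let (X, ‖·‖) be a real Banach space and U : X → X a mapping such that for some positive integer N the iterate U^N is a (b,θ)-enriched contraction, i.e., there exist b ∈ [0,∞) and θ ∈ [0, b+1) with ‖b(x−y) + U^N x − U^N y‖ ≤ θ‖x−y‖ for all x, y ∈ X. Then U has exactly one fixed point in X. -/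
/-!
Write `T = U^[N]`. The averaged map `x ↦ (b + 1)⁻¹ • (b • x + T x)` is a contraction with
constant `θ / (b + 1) < 1` and has the same fixed points as `T`, so by Banach's theorem `T` has
exactly one fixed point `p`. Since `U` commutes with `T`, `U p` is again a fixed point of `T`,
hence `U p = p`; and every fixed point of `U` is a fixed point of `T`.
-/

/-- **Asymptotic version of the enriched contraction principle.**
If some iterate `U^N` (`N ≥ 1`) of a self-map `U` of a real Banach space
is a `(b, θ)`-enriched contraction, then `U` has exactly one fixed point. -/
theorem asymptotic_enriched_contraction_unique_fixed_point
    {X : Type*} [NormedAddCommGroup X] [NormedSpace ℝ X] [CompleteSpace X]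
    (U : X → X) (N : ℕ) (hN : 1 ≤ N) (b θ : ℝ)
    (hb : 0 ≤ b) (hθ0 : 0 ≤ θ) (hθ : θ < b + 1)
    (hU : ∀ x y : X, ‖b • (x - y) + (U^[N] x - U^[N] y)‖ ≤ θ * ‖x - y‖) :
    ∃! p : X, U p = p := by
  have hb1 : 0 < b + 1 := by linarith
  set f : X → X := fun x => (b + 1)⁻¹ • (b • x + U^[N] x) with hf
  have hc : ContractingWith (NNReal.mk (θ / (b + 1)) (by positivity)) f := by
    refine ⟨?_, LipschitzWith.of_dist_le_mul fun x y => ?_⟩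
    · apply NNReal.coe_lt_coe.1
      exact (div_lt_one hb1).2 hθ
    · have h : f x - f y = (b + 1)⁻¹ • (b • (x - y) + (U^[N] x - U^[N] y)) := by
        simp only [hf]
        module
      rw [dist_eq_norm, dist_eq_norm, h, norm_smul, Real.norm_of_nonneg (by positivity)]
      calc (b + 1)⁻¹ * ‖b • (x - y) + (U^[N] x - U^[N] y)‖
          ≤ (b + 1)⁻¹ * (θ * ‖x - y‖) := by gcongr; exact hU x y
        _ = θ / (b + 1) * ‖x - y‖ := by ring
  have hfix : ∀ x, f x = x ↔ U^[N] x = x := fun x => by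
    simp only [hf]
    rw [inv_smul_eq_iff₀ hb1.ne', add_smul, one_smul, add_right_inj]
  have huniq : ∀ x y, U^[N] x = x → U^[N] y = y → x = y := fun x y hx hy =>
    hc.fixedPoint_unique' ((hfix x).2 hx) ((hfix y).2 hy)
  have hp : U^[N] (hc.fixedPoint f) = hc.fixedPoint f := (hfix _).1 hc.fixedPoint_isFixedPt
  refine ⟨hc.fixedPoint f, huniq _ _ ?_ hp, fun q hq => huniq _ _ ?_ hp⟩
  · rw [← Function.iterate_succ_apply, Function.iterate_succ_apply', hp]
  · exact Function.iterate_fixed hq N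
end

section
/- Let (X, ‖·‖) be a real Banach space and U : X → X a mapping such that for some positive integer N the iterate U^N is a (b,θ)-enriched contraction. Let p be the unique fixed point of U and set λ = 1/(b+1). Then for any x₀ ∈ X, the iterative scheme x_{n+1} = (1−λ)x_n + λ U^N x_n converges to p. -/
/-!
Write `S x = (1 - λ) x + λ U^N x`. Since `1 - λ = λ b` and `p` is fixed by `U^N`,
`S x - p = λ (b (x - p) + (U^N x - U^N p))`, so the enriched contraction condition gives
`‖S x - p‖ ≤ λ θ ‖x - p‖` with `λ θ = θ / (b + 1) < 1`. Hence the iterates of `S` satisfy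
`‖S^n x₀ - p‖ ≤ (λ θ)^n ‖x₀ - p‖ → 0`.
-/

/-- **Convergence of the Krasnoselskij scheme for the iterate `U^N`.**
If `U^N` is a `(b, θ)`-enriched contraction on a real Banach space, `p` is
the unique fixed point of `U`, and `λ = 1/(b+1)`, then for any `x₀` the
scheme `x_{n+1} = (1−λ)x_n + λ U^N x_n` converges to `p`. -/
theorem asymptotic_enriched_contraction_krasnoselskij_converges
    {X : Type*} [NormedAddCommGroup X] [NormedSpace ℝ X] [CompleteSpace X]
    (U : X → X) (N : ℕ) (hN : 1 ≤ N) (b θ : ℝ)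
    (hb : 0 ≤ b) (hθ0 : 0 ≤ θ) (hθ : θ < b + 1)
    (hU : ∀ x y : X, ‖b • (x - y) + (U^[N] x - U^[N] y)‖ ≤ θ * ‖x - y‖)
    (p : X) (hp : U p = p) (hpuniq : ∀ q : X, U q = q → q = p)
    (lam : ℝ) (hlam : lam = 1 / (b + 1)) (x₀ : X) :
    Filter.Tendsto
      (fun n : ℕ => (fun x => (1 - lam) • x + lam • U^[N] x)^[n] x₀)
      Filter.atTop (nhds p) := by
  have hb1 : 0 < b + 1 := by linarith
  have hlam0 : 0 < lam := by rw [hlam]; positivity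
  have hlamb : 1 - lam = lam * b := by rw [hlam]; field_simp; ring
  have hc0 : 0 ≤ lam * θ := by positivity
  have hc1 : lam * θ < 1 := by
    rw [hlam, one_div_mul_eq_div, div_lt_one hb1]
    exact hθ
  have hpN : U^[N] p = p := Function.iterate_fixed hp N
  have hstep : ∀ x : X, ‖((1 - lam) • x + lam • U^[N] x) - p‖ ≤ lam * θ * ‖x - p‖ := by
    intro x
    have hsplit : ((1 - lam) • x + lam • U^[N] x) - p
        = lam • (b • (x - p) + (U^[N] x - U^[N] p)) := by
      rw [hpN, smul_add, smul_smul, ← hlamb]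
      module
    rw [hsplit, norm_smul, Real.norm_of_nonneg hlam0.le, mul_assoc]
    exact mul_le_mul_of_nonneg_left (hU x p) hlam0.le
  have hbound : ∀ n : ℕ, ‖(fun x => (1 - lam) • x + lam • U^[N] x)^[n] x₀ - p‖
      ≤ (lam * θ) ^ n * ‖x₀ - p‖ := by
    intro n
    induction n with
    | zero => simp
    | succ n ih =>
      rw [Function.iterate_succ_apply', pow_succ', mul_assoc]
      exact (hstep _).trans (mul_le_mul_of_nonneg_left ih hc0)
  rw [tendsto_iff_norm_sub_tendsto_zero]
  refine squeeze_zero (fun _ => norm_nonneg _) hbound ?_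
  simpa using (tendsto_pow_atTop_nhds_zero_of_lt_one hc0 hc1).mul_const ‖x₀ - p‖
end

section
/- Let X be a real linear space equipped with two norms ‖·‖_d and ‖·‖_ρ, and let T : X → X be a mapping. Suppose: (i) ‖x − y‖_d ≤ ‖x − y‖_ρ for all x, y ∈ X; (ii) (X, ‖·‖_d) is a Banach space; (iii) T is continuous with respect to ‖·‖_d; (iv) T is a (b,θ)-enriched contraction with respect to ‖·‖_ρ, i.e., there exist b ∈ [0,∞) and θ ∈ [0, b+1) such that ‖b(x−y) + Tx − Ty‖_ρ ≤ θ‖x−y‖_ρ for all x, y ∈ X. Then T has a unique fixed point x* in X, and for λ = 1/(b+1) and every x₀ ∈ X the iterates T_λⁿ(x₀), where T_λ(x) = (1−λ)x + λT(x), converge to x* in the norm ‖·‖_d. -/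
/-! Since `1 - lam = lam * b`, differences of the averaged map `S x = (1 - lam) • x + lam • T x`
satisfy `S x - S y = lam • (b • (x - y) + (T x - T y))`, so the enriched condition says exactly
that `S` is a `ρ`-contraction with constant `c = lam * θ < 1`. Successive iterates of `S` are thus
`ρ`-geometrically close, hence also `‖·‖`-geometrically close, and converge by completeness of
`‖·‖`. Continuity of `T` in `‖·‖` makes the limit a fixed point of `S`, i.e. of `T`, and the
`ρ`-contraction makes it unique. -/

/-- **Maia-type fixed point theorem for enriched contractions.**
Let `X` be a real linear space carrying two norms: the norm `‖·‖` of a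
Banach-space structure (the `d`-norm) and a second norm `ρ`. Assume
(i) `‖z‖ ≤ ρ z` for all `z`, (ii) `(X, ‖·‖)` is a Banach space,
(iii) `T` is continuous with respect to `‖·‖`, and (iv) `T` is a
`(b, θ)`-enriched contraction with respect to `ρ`. Then `T` has a unique
fixed point `x*` and, with `λ = 1/(b+1)`, for every `x₀` the iterates
`T_λⁿ x₀` converge to `x*` in the norm `‖·‖`. -/
theorem maia_enriched_contraction
    {X : Type*} [NormedAddCommGroup X] [NormedSpace ℝ X] [CompleteSpace X]
    (ρ : X → ℝ)
    (hρ_zero : ∀ x : X, ρ x = 0 ↔ x = 0)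
    (hρ_add : ∀ x y : X, ρ (x + y) ≤ ρ x + ρ y)
    (hρ_smul : ∀ (a : ℝ) (x : X), ρ (a • x) = |a| * ρ x)
    (T : X → X) (b θ : ℝ) (hb : 0 ≤ b) (hθ0 : 0 ≤ θ) (hθ : θ < b + 1)
    (h_le : ∀ x y : X, ‖x - y‖ ≤ ρ (x - y))
    (hcont : Continuous T)
    (hT : ∀ x y : X, ρ (b • (x - y) + (T x - T y)) ≤ θ * ρ (x - y))
    (lam : ℝ) (hlam : lam = 1 / (b + 1)) :
    ∃ xs : X, T xs = xs ∧ (∀ q : X, T q = q → q = xs) ∧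
      ∀ x₀ : X,
        Filter.Tendsto
          (fun n : ℕ => (fun x => (1 - lam) • x + lam • T x)^[n] x₀)
          Filter.atTop (nhds xs) := by
  have hb1 : 0 < b + 1 := by linarith
  have hlam0 : 0 < lam := by rw [hlam]; positivity
  have hlb : 1 - lam = lam * b := by rw [hlam]; field_simp; ring
  set S : X → X := fun x => (1 - lam) • x + lam • T x with hS
  have hScont : Continuous S := by fun_prop
  have hρ_nonneg : ∀ x : X, 0 ≤ ρ x := fun x => by
    simpa using (norm_nonneg _).trans (h_le x 0)
  obtain ⟨c, hc⟩ : ∃ c, c = lam * θ := ⟨_, rfl⟩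
  have hc0 : 0 ≤ c := by rw [hc]; positivity
  have hc1 : c < 1 := by
    rw [hc, hlam, one_div, inv_mul_lt_iff₀ hb1]; linarith
  have hcontr : ∀ x y, ρ (S x - S y) ≤ c * ρ (x - y) := fun x y => by
    have e : S x - S y = lam • (b • (x - y) + (T x - T y)) := by
      simp only [hS, hlb]; module
    rw [e, hρ_smul, abs_of_pos hlam0, hc, mul_assoc]
    exact mul_le_mul_of_nonneg_left (hT x y) hlam0.le
  have hiter : ∀ (n : ℕ) (x y : X), ρ (S^[n] x - S^[n] y) ≤ ρ (x - y) * c ^ n := by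
    intro n x y
    induction n with
    | zero => simp
    | succ n ih =>
      rw [Function.iterate_succ_apply', Function.iterate_succ_apply']
      calc _ ≤ c * ρ (S^[n] x - S^[n] y) := hcontr _ _
        _ ≤ c * (ρ (x - y) * c ^ n) := mul_le_mul_of_nonneg_left ih hc0
        _ = _ := by ring
  have hfix : ∀ x, S x = x ↔ T x = x := fun x => by
    have e : S x - x = lam • (T x - x) := by simp only [hS]; module
    rw [← sub_eq_zero, e, smul_eq_zero, or_iff_right hlam0.ne', sub_eq_zero]
  have huniq : ∀ x y, S x = x → S y = y → x = y := fun x y hx hy => by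
    have h := hcontr x y
    rw [hx, hy] at h
    have h0 : ρ (x - y) = 0 := by nlinarith [hρ_nonneg (x - y)]
    exact sub_eq_zero.mp ((hρ_zero _).mp h0)
  have hlim : ∀ x₀ : X, ∃ z, S z = z ∧
      Filter.Tendsto (fun n : ℕ => S^[n] x₀) Filter.atTop (nhds z) := fun x₀ => by
    have hcau : CauchySeq (fun n : ℕ => S^[n] x₀) := by
      refine cauchySeq_of_le_geometric c (ρ (x₀ - S x₀)) hc1 fun n => ?_
      rw [dist_eq_norm, Function.iterate_succ_apply]
      exact (h_le _ _).trans (hiter n _ _)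
    obtain ⟨z, hz⟩ := cauchySeq_tendsto_of_complete hcau
    exact ⟨z, isFixedPt_of_tendsto_iterate hz hScont.continuousAt, hz⟩
  obtain ⟨xs, hxs, -⟩ := hlim 0
  refine ⟨xs, (hfix xs).mp hxs, fun q hq => huniq q xs ((hfix q).mpr hq) hxs, fun x₀ => ?_⟩
  obtain ⟨z, hz, hzlim⟩ := hlim x₀
  rwa [huniq z xs hz hxs] at hzlim
end
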